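/- In the K3 lattice L_{K3} = E8 ⊕ E8 ⊕ U ⊕ U ⊕ U of rank 22, there exists a primitive sublattice M (a ℤ-submodule with torsion-free quotient L_{K3}/M) of rank 11 such that M with the restricted form is isometric to U ⊕ D8 ⊕ A1, and the orthogonal complement M^⊥ = {x ∈ L_{K3} : x·m = 0 for all m ∈ M} with the restricted form is isometric to ⟨2⟩ ⊕ U(2) ⊕ E8. -/

import Mathlib

open Matrix

/-- The hyperbolic plane `U`, with Gram matrix `[[0,1],[1,0]]`. -/
abbrev latU : Matrix (Fin 2) (Fin 2) ℤ := !![0, 1; 1, 0]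

/-- The negative definite even unimodular lattice `E₈` (negative of the Cartan matrix). -/
abbrev latE8 : Matrix (Fin 8) (Fin 8) ℤ :=
  !![-2,  0,  1,  0,  0,  0,  0,  0;
      0, -2,  0,  1,  0,  0,  0,  0;
      1,  0, -2,  1,  0,  0,  0,  0;
      0,  1,  1, -2,  1,  0,  0,  0;
      0,  0,  0,  1, -2,  1,  0,  0;
      0,  0,  0,  0,  1, -2,  1,  0;
      0,  0,  0,  0,  0,  1, -2,  1;
      0,  0,  0,  0,  0,  0,  1, -2]

/-- Orthogonal direct sum of two lattices (block-diagonal Gram matrix). -/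
def dsum {a b : ℕ} (A : Matrix (Fin a) (Fin a) ℤ) (B : Matrix (Fin b) (Fin b) ℤ) :
    Matrix (Fin (a + b)) (Fin (a + b)) ℤ :=
  Matrix.reindex finSumFinEquiv finSumFinEquiv (Matrix.fromBlocks A 0 0 B)

/-- The bilinear form of the lattice with Gram matrix `G` : `x ⋅ y = xᵀ G y`. -/
def bform {n : ℕ} (G : Matrix (Fin n) (Fin n) ℤ) (x y : Fin n → ℤ) : ℤ :=
  x ⬝ᵥ G.mulVec y


/-- The negative definite lattice `D₈` (negative of the Cartan matrix of `D₈`). -/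
abbrev latD8 : Matrix (Fin 8) (Fin 8) ℤ :=
  !![-2,  1,  0,  0,  0,  0,  0,  0;
      1, -2,  1,  0,  0,  0,  0,  0;
      0,  1, -2,  1,  0,  0,  0,  0;
      0,  0,  1, -2,  1,  0,  0,  0;
      0,  0,  0,  1, -2,  1,  0,  0;
      0,  0,  0,  0,  1, -2,  1,  1;
      0,  0,  0,  0,  0,  1, -2,  0;
      0,  0,  0,  0,  0,  1,  0, -2]

/-- The K3 lattice `L_{K3} = E8 ⊕ E8 ⊕ U ⊕ U ⊕ U` of rank 22. -/
def gramK3 : Matrix (Fin 22) (Fin 22) ℤ :=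
  dsum latE8 (dsum latE8 (dsum latU (dsum latU latU)))

/-- `M = U ⊕ D8 ⊕ A1`. -/
def gramM : Matrix (Fin 11) (Fin 11) ℤ := dsum (dsum latU latD8) !![(-2 : ℤ)]

/-- `N = ⟨2⟩ ⊕ U(2) ⊕ E8`. -/
def gramN : Matrix (Fin 11) (Fin 11) ℤ := dsum (dsum !![(2 : ℤ)] (2 • latU)) latE8

/-!
The lattice `U ⊕ E8` contains a primitive copy of `D8` with orthogonal complement `U(2)`, and `U`
contains a primitive copy of `A1` with orthogonal complement `⟨2⟩`. Taking the orthogonal sum with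
the tautological embeddings `U ⊆ U` and `0 ⊆ E8` gives the primitive sublattice
`U ⊕ D8 ⊕ 0 ⊕ A1` of `U ⊕ (U ⊕ E8) ⊕ E8 ⊕ U`, whose complement is `0 ⊕ U(2) ⊕ E8 ⊕ ⟨2⟩`.

A sublattice with basis `aᵢ` is primitive as soon as there are vectors `dⱼ` with `aᵢ ⬝ dⱼ = δᵢⱼ`,
and then `x ↦ x - ∑ᵢ (x ⬝ aᵢ) dᵢ` fixes its orthogonal complement pointwise.
-/

section RowSpan

variable {R m n k : Type*} [CommSemiring R] [Fintype m] [Fintype n]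

theorem vecMul_dotProduct_mulVec_vecMul [Fintype k] (G : Matrix n n R) (A : Matrix m n R)
    (B : Matrix k n R) (s : m → R) (t : k → R) :
    (s ᵥ* A) ⬝ᵥ G *ᵥ (t ᵥ* B) = s ⬝ᵥ (A * G * Bᵀ) *ᵥ t := by
  rw [← mulVec_transpose B, ← dotProduct_mulVec, mulVec_mulVec, mulVec_mulVec, Matrix.mul_assoc]

theorem forall_mem_range_vecMulLinear_dotProduct_eq_zero_iff (G : Matrix n n R) (A : Matrix m n R)
    (x : n → R) :
    (∀ y ∈ LinearMap.range A.vecMulLinear, x ⬝ᵥ G *ᵥ y = 0) ↔ x ᵥ* (G * Aᵀ) = 0 := by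
  have pairing (t : m → R) : x ⬝ᵥ G *ᵥ (t ᵥ* A) = (x ᵥ* (G * Aᵀ)) ⬝ᵥ t := by
    rw [← mulVec_transpose A, mulVec_mulVec, dotProduct_mulVec]
  simp only [LinearMap.mem_range, forall_exists_index, forall_apply_eq_imp_iff,
    vecMulLinear_apply, pairing, dotProduct_eq_zero_iff]

variable [DecidableEq m] {A : Matrix m n R} {P : Matrix n m R}

theorem mem_range_vecMulLinear_iff_of_mul_eq_one (hAP : A * P = 1) {x : n → R} :
    x ∈ LinearMap.range A.vecMulLinear ↔ x ᵥ* (P * A) = x := by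
  constructor
  · rintro ⟨s, rfl⟩
    rw [vecMulLinear_apply, vecMul_vecMul, ← Matrix.mul_assoc, hAP, Matrix.one_mul]
  · intro hx
    exact ⟨x ᵥ* P, by rw [vecMulLinear_apply, vecMul_vecMul, hx]⟩

theorem mem_range_vecMulLinear_of_smul_mem [IsDomain R] (hAP : A * P = 1) {c : R} (hc : c ≠ 0)
    {x : n → R} (hx : c • x ∈ LinearMap.range A.vecMulLinear) :
    x ∈ LinearMap.range A.vecMulLinear := by
  rw [mem_range_vecMulLinear_iff_of_mul_eq_one hAP] at hx ⊢
  rw [smul_vecMul] at hx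
  exact smul_right_injective _ hc hx

theorem exists_isometry_range_vecMulLinear (G : Matrix n n R) (hAP : A * P = 1) :
    ∃ e : LinearMap.range A.vecMulLinear ≃ₗ[R] (m → R),
      ∀ x y, e x ⬝ᵥ (A * G * Aᵀ) *ᵥ e y = x ⬝ᵥ G *ᵥ y := by
  have left_inv : Function.LeftInverse (fun x ↦ x ᵥ* P) A.vecMulLinear := fun s ↦ by
    simp [hAP]
  let E := LinearEquiv.ofInjective A.vecMulLinear left_inv.injective
  refine ⟨E.symm, E.surjective.forall₂.2 fun s t ↦ ?_⟩
  rw [E.symm_apply_apply, E.symm_apply_apply, LinearEquiv.ofInjective_apply,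
    LinearEquiv.ofInjective_apply, vecMulLinear_apply, vecMulLinear_apply,
    vecMul_dotProduct_mulVec_vecMul]

end RowSpan

/-- A primitive embedding of the lattice with Gram matrix `g` into the one with Gram matrix `G`,
together with an identification of its orthogonal complement with the lattice with Gram matrix `h`.
Vectors are rows, so matrices act on them from the right. The rows of `sub` and `compl` are bases of
the image and of its complement. The rows of `dual` pair with those of `sub` to the identity matrix,
and the last two fields say that `coord` computes the coordinates in the basis `compl` of the
projection `x ↦ x - ∑ᵢ (x ⬝ subᵢ) dualᵢ`. -/
structure PrimitiveEmbedding {R m n k : Type*} [CommRing R] [Fintype m] [Fintype n] [Fintype k]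
    [DecidableEq m] [DecidableEq n] [DecidableEq k]
    (G : Matrix n n R) (g : Matrix m m R) (h : Matrix k k R) where
  sub : Matrix m n R
  compl : Matrix k n R
  dual : Matrix m n R
  coord : Matrix n k R
  sub_gram : sub * G * subᵀ = g
  compl_gram : compl * G * complᵀ = h
  compl_orthogonal : compl * G * subᵀ = 0
  sub_dual : sub * G * dualᵀ = 1
  compl_mul_coord : compl * coord = 1
  coord_mul_compl : coord * compl = 1 - G * subᵀ * dual

namespace PrimitiveEmbedding

variable {R m n k : Type*} [CommRing R] [Fintype m] [Fintype n] [Fintype k]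
  [DecidableEq m] [DecidableEq n] [DecidableEq k]
  {G : Matrix n n R} {g : Matrix m m R} {h : Matrix k k R}

theorem mem_range_sub_of_smul_mem [IsDomain R] (S : PrimitiveEmbedding G g h) {c : R} (hc : c ≠ 0)
    {x : n → R} (hx : c • x ∈ LinearMap.range S.sub.vecMulLinear) :
    x ∈ LinearMap.range S.sub.vecMulLinear :=
  mem_range_vecMulLinear_of_smul_mem ((Matrix.mul_assoc ..).symm.trans S.sub_dual) hc hx

theorem exists_isometry_sub (S : PrimitiveEmbedding G g h) :
    ∃ e : LinearMap.range S.sub.vecMulLinear ≃ₗ[R] (m → R),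
      ∀ x y, e x ⬝ᵥ g *ᵥ e y = x ⬝ᵥ G *ᵥ y := by
  simpa only [S.sub_gram] using
    exists_isometry_range_vecMulLinear G ((Matrix.mul_assoc ..).symm.trans S.sub_dual)

theorem exists_isometry_compl (S : PrimitiveEmbedding G g h) :
    ∃ e : LinearMap.range S.compl.vecMulLinear ≃ₗ[R] (k → R),
      ∀ x y, e x ⬝ᵥ h *ᵥ e y = x ⬝ᵥ G *ᵥ y := by
  simpa only [S.compl_gram] using exists_isometry_range_vecMulLinear G S.compl_mul_coord

theorem mem_range_compl_iff (S : PrimitiveEmbedding G g h) {x : n → R} :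
    x ∈ LinearMap.range S.compl.vecMulLinear ↔
      ∀ y ∈ LinearMap.range S.sub.vecMulLinear, x ⬝ᵥ G *ᵥ y = 0 := by
  rw [forall_mem_range_vecMulLinear_dotProduct_eq_zero_iff]
  constructor
  · rintro ⟨s, rfl⟩
    rw [vecMulLinear_apply, vecMul_vecMul, ← Matrix.mul_assoc, S.compl_orthogonal, vecMul_zero]
  · intro hx
    rw [mem_range_vecMulLinear_iff_of_mul_eq_one S.compl_mul_coord, S.coord_mul_compl, vecMul_sub,
      vecMul_one, ← vecMul_vecMul, hx, zero_vecMul, sub_zero]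

/-- The zero sublattice, whose orthogonal complement is everything. -/
def zero (G : Matrix n n R) : PrimitiveEmbedding G (0 : Matrix (Fin 0) (Fin 0) R) G where
  sub := 0
  compl := 1
  dual := 0
  coord := 1
  sub_gram := Subsingleton.elim _ _
  compl_gram := by simp
  compl_orthogonal := Subsingleton.elim _ _
  sub_dual := Subsingleton.elim _ _
  compl_mul_coord := Matrix.one_mul 1
  coord_mul_compl := by simp

/-- A unimodular lattice as a primitive sublattice of itself. -/
noncomputable def self (hG : G.IsSymm) (hdet : IsUnit G.det) :
    PrimitiveEmbedding G G (0 : Matrix (Fin 0) (Fin 0) R) where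
  sub := 1
  compl := 0
  dual := G⁻¹
  coord := 0
  sub_gram := by simp
  compl_gram := Subsingleton.elim _ _
  compl_orthogonal := Subsingleton.elim _ _
  sub_dual := by
    rw [Matrix.one_mul, transpose_nonsing_inv, hG.eq, mul_nonsing_inv G hdet]
  compl_mul_coord := Subsingleton.elim _ _
  coord_mul_compl := by
    rw [transpose_one, Matrix.mul_one, mul_nonsing_inv G hdet, sub_self, Matrix.mul_zero]

section DirectSum

variable {m' n' k' : Type*} [Fintype m'] [Fintype n'] [Fintype k']
  [DecidableEq m'] [DecidableEq n'] [DecidableEq k']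

/-- The orthogonal sum of two primitive embeddings. -/
def directSum {G' : Matrix n' n' R} {g' : Matrix m' m' R} {h' : Matrix k' k' R}
    (S : PrimitiveEmbedding G g h) (S' : PrimitiveEmbedding G' g' h') :
    PrimitiveEmbedding (fromBlocks G 0 0 G') (fromBlocks g 0 0 g') (fromBlocks h 0 0 h') where
  sub := fromBlocks S.sub 0 0 S'.sub
  compl := fromBlocks S.compl 0 0 S'.compl
  dual := fromBlocks S.dual 0 0 S'.dual
  coord := fromBlocks S.coord 0 0 S'.coord
  sub_gram := by
    simp [fromBlocks_transpose, fromBlocks_multiply, S.sub_gram, S'.sub_gram]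
  compl_gram := by
    simp [fromBlocks_transpose, fromBlocks_multiply, S.compl_gram, S'.compl_gram]
  compl_orthogonal := by
    simp [fromBlocks_transpose, fromBlocks_multiply, S.compl_orthogonal, S'.compl_orthogonal]
  sub_dual := by
    simp [fromBlocks_transpose, fromBlocks_multiply, S.sub_dual, S'.sub_dual]
  compl_mul_coord := by
    simp [fromBlocks_multiply, S.compl_mul_coord, S'.compl_mul_coord]
  coord_mul_compl := by
    simp [fromBlocks_transpose, fromBlocks_multiply, S.coord_mul_compl, S'.coord_mul_compl,
      ← fromBlocks_one, sub_eq_add_neg, fromBlocks_neg, fromBlocks_add]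

/-- Relabelling of the bases of the three lattices of a primitive embedding. -/
def reindex (S : PrimitiveEmbedding G g h) (en : n ≃ n') (em : m ≃ m') (ek : k ≃ k') :
    PrimitiveEmbedding (G.reindex en en) (g.reindex em em) (h.reindex ek ek) where
  sub := S.sub.reindex em en
  compl := S.compl.reindex ek en
  dual := S.dual.reindex em en
  coord := S.coord.reindex en ek
  sub_gram := by simp [S.sub_gram]
  compl_gram := by simp [S.compl_gram]
  compl_orthogonal := by simp [S.compl_orthogonal]
  sub_dual := by simp [S.sub_dual]
  compl_mul_coord := by simp [S.compl_mul_coord]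
  coord_mul_compl := by
    simp [S.coord_mul_compl, submatrix_sub]

end DirectSum

end PrimitiveEmbedding

/-- The orthogonal sum of two primitive embeddings of integral lattices. -/
def PrimitiveEmbedding.dsum {n m k n' m' k' : ℕ}
    {G : Matrix (Fin n) (Fin n) ℤ} {g : Matrix (Fin m) (Fin m) ℤ} {h : Matrix (Fin k) (Fin k) ℤ}
    {G' : Matrix (Fin n') (Fin n') ℤ} {g' : Matrix (Fin m') (Fin m') ℤ}
    {h' : Matrix (Fin k') (Fin k') ℤ}
    (S : PrimitiveEmbedding G g h) (S' : PrimitiveEmbedding G' g' h') :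
    PrimitiveEmbedding (dsum G G') (dsum g g') (dsum h h') :=
  (S.directSum S').reindex finSumFinEquiv finSumFinEquiv finSumFinEquiv

/-- `A1` as the span of `e - f` in the hyperbolic plane with isotropic basis `e`, `f`. -/
def embeddingA1 : PrimitiveEmbedding latU !![(-2 : ℤ)] !![(2 : ℤ)] where
  sub := !![1, -1]
  compl := !![1, 1]
  dual := !![0, 1]
  coord := !![1; 0]
  sub_gram := by decide
  compl_gram := by decide
  compl_orthogonal := by decide
  sub_dual := by decide
  compl_mul_coord := by decide
  coord_mul_compl := by decide

/-- A primitive copy of `D8` in `U ⊕ E8`, in the basis `e, f, α₁, …, α₈` with `e, f` isotropic and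
`αᵢ` the simple roots in Bourbaki's numbering. Deleting `α₁` from the extended Dynkin diagram of
`E8` leaves the diagram of `D8`, with nodes `-θ, α₈, α₇, α₆, α₅, α₄, α₂, α₃` where `θ` is the
highest root; these roots span a sublattice of index 2 in `E8`. Replacing `α₂` by `α₂ + e` does not
change the Gram matrix and makes the span primitive. -/
def embeddingD8 : PrimitiveEmbedding (dsum latU latE8) latD8 (2 • latU) where
  sub :=
    !![0, 0, -2, -3, -4, -6, -5, -4, -3, -2;
       0, 0,  0,  0,  0,  0,  0,  0,  0,  1;
       0, 0,  0,  0,  0,  0,  0,  0,  1,  0;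
       0, 0,  0,  0,  0,  0,  0,  1,  0,  0;
       0, 0,  0,  0,  0,  0,  1,  0,  0,  0;
       0, 0,  0,  0,  0,  1,  0,  0,  0,  0;
       1, 0,  0,  1,  0,  0,  0,  0,  0,  0;
       0, 0,  0,  0,  1,  0,  0,  0,  0,  0]
  compl :=
    !![1, 0,  0, 0,  0, 0, 0, 0, 0, 0;
       2, 2, -2, 1, -1, 0, 0, 0, 0, 0]
  dual :=
    !![0, 7, -5, 6, 0, 5, 4, 3, 2, 1;
       0, 6, -4, 5, 0, 4, 3, 2, 1, 0;
       0, 5, -3, 4, 0, 3, 2, 1, 0, 0;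
       0, 4, -2, 3, 0, 2, 1, 0, 0, 0;
       0, 3, -1, 2, 0, 1, 0, 0, 0, 0;
       0, 2,  0, 1, 0, 0, 0, 0, 0, 0;
       0, 1,  0, 0, 0, 0, 0, 0, 0, 0;
       0, 0,  1, 0, 0, 0, 0, 0, 0, 0]
  coord :=
    !![1,  0;
       0,  0;
       0,  0;
       0,  0;
       2, -1;
       0,  0;
       0,  0;
       0,  0;
       0,  0;
       0,  0]
  sub_gram := by decide +kernel
  compl_gram := by decide +kernel
  compl_orthogonal := by decide +kernel
  sub_dual := by decide +kernel
  compl_mul_coord := by decide +kernel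
  coord_mul_compl := by decide +kernel

-- The flip carries the first two copies of `U` past `E8 ⊕ E8 ⊕ U`.
theorem gramK3_eq_reindex : gramK3 = (dsum (dsum (dsum latU (dsum latU latE8)) latE8) latU).reindex
    (finAddFlip (m := 4) (n := 18)) (finAddFlip (m := 4) (n := 18)) := by
  decide +kernel

theorem gramM_eq_dsum :
    gramM = dsum (dsum (dsum latU latD8) (0 : Matrix (Fin 0) (Fin 0) ℤ)) !![-2] := by
  decide +kernel

theorem gramN_eq_reindex : gramN =
    (dsum (dsum (dsum (0 : Matrix (Fin 0) (Fin 0) ℤ) (2 • latU)) latE8) !![2]).reindex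
      (finAddFlip (m := 10) (n := 1)) (finAddFlip (m := 10) (n := 1)) := by
  decide +kernel

theorem nonempty_primitiveEmbedding_gramK3 :
    Nonempty (PrimitiveEmbedding gramK3 gramM gramN) := by
  let selfU : PrimitiveEmbedding latU latU 0 := .self (by decide) (by decide)
  rw [gramK3_eq_reindex, gramM_eq_dsum, gramN_eq_reindex]
  exact ⟨(((selfU.dsum embeddingD8).dsum (.zero latE8)).dsum embeddingA1).reindex
    (finAddFlip (m := 4) (n := 18)) (.refl _) finAddFlip⟩

/-- There is a primitive rank-11 sublattice `M` of the K3 lattice isometric to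
`U ⊕ D8 ⊕ A1` whose orthogonal complement `M^⊥` is isometric to `⟨2⟩ ⊕ U(2) ⊕ E8`. -/
theorem exists_primitive_UD8A1_in_K3 :
    ∃ M : Submodule ℤ (Fin 22 → ℤ),
      (∀ c : ℤ, c ≠ 0 → ∀ x, c • x ∈ M → x ∈ M) ∧
      (∃ e : M ≃ₗ[ℤ] (Fin 11 → ℤ),
        ∀ x y : M, bform gramM (e x) (e y) = bform gramK3 x y) ∧
      ∃ W : Submodule ℤ (Fin 22 → ℤ),
        (∀ x, x ∈ W ↔ ∀ m ∈ M, bform gramK3 x m = 0) ∧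
        ∃ f : W ≃ₗ[ℤ] (Fin 11 → ℤ),
          ∀ x y : W, bform gramN (f x) (f y) = bform gramK3 x y := by
  obtain ⟨S⟩ := nonempty_primitiveEmbedding_gramK3
  exact ⟨LinearMap.range S.sub.vecMulLinear, fun _ hc _ ↦ S.mem_range_sub_of_smul_mem hc,
    S.exists_isometry_sub, LinearMap.range S.compl.vecMulLinear, fun _ ↦ S.mem_range_compl_iff,
    S.exists_isometry_compl⟩
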